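/- Let G₁ be an r₁-regular graph on n₁ vertices and m₁ edges, and let G₂ be an arbitrary graph on n₂ vertices. Then for each α ∈ [0,1], the characteristic polynomial of A_α(G₁ ∨̇ G₂), where G₁ ∨̇ G₂ is the subdivision-vertex join, satisfies ψ_{A_α(G₁ ∨̇ G₂)}(x) = (x−2α)^{m₁−n₁} · ψ_{A_α(G₂)}(x−αn₁) · ∏_{i=2}^{n₁} ( x² − α(2+r₁+n₂)x + α(αr₁+r₁+2αn₂) − (1−α)((1−α)r₁ + λ_i(A_α(G₁))) ) · ( x² − α(2+r₁+n₂)x − 2(r₁ − 2αr₁ − α²n₂) − n₁(1−α)²(x−2α)·Γ_{A_α(G₂)}(x−αn₁) ), where λ₁(A_α(G₁)) ≥ ⋯ ≥ λ_{n₁}(A_α(G₁)) are the A_α-eigenvalues of G₁. -/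

import Mathlib

open Matrix Polynomial
open scoped Classical

noncomputable section

/-- `A_α(G) = α·D(G) + (1-α)·A(G)`, where `D(G)` is the diagonal degree matrix and
`A(G)` the adjacency matrix. -/
def Aalpha {V : Type*} [Fintype V] (G : SimpleGraph V) (α : ℝ) : Matrix V V ℝ :=
  α • Matrix.diagonal (fun v => (G.degree v : ℝ)) + (1 - α) • G.adjMatrix ℝ

/-- The `M`-coronal `Γ_M(x) = 1ᵀ (xI − M)⁻¹ 1`, i.e. the sum of the entries of
`(xI − M)⁻¹`. -/
def coronal {n : Type*} [Fintype n] (M : Matrix n n ℝ) (x : ℝ) : ℝ :=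
  ∑ i, ∑ j, (x • (1 : Matrix n n ℝ) - M)⁻¹ i j

/-- The subdivision-vertex join `G₁ ∨̇ G₂`: take the subdivision graph `S(G₁)` (a new
vertex inserted in each edge of `G₁`) together with `G₂`, and join every original vertex
of `G₁` with every vertex of `G₂`. -/
def subdivisionVertexJoin {V₁ V₂ : Type*} (G₁ : SimpleGraph V₁) (G₂ : SimpleGraph V₂) :
    SimpleGraph (V₁ ⊕ (↥G₁.edgeSet ⊕ V₂)) :=
  SimpleGraph.fromRel fun a b =>
    match a, b with
    | Sum.inl v, Sum.inr (Sum.inl e) => v ∈ (e : Sym2 V₁)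
    | Sum.inl _, Sum.inr (Sum.inr _) => True
    | Sum.inr (Sum.inr u), Sum.inr (Sum.inr w) => G₂.Adj u w
    | _, _ => False

/-!
Order the vertices of `G₁ ∨̇ G₂` as `V(G₁)`, `E(G₁)`, `V(G₂)`. No new vertex is adjacent to a
vertex of `G₂`, so in `xI - A_α` the block on `E(G₁) ∪ V(G₂)` is block diagonal, and the
determinant reduces to a Schur complement on `V(G₁)`. The incidence matrix `R` of `G₁` enters it as
`R Rᵀ = D + A`, and `G₂` enters it only through its coronal, as a multiple of the all-ones matrix.
For regular `G₁` the complement is therefore `cI - ((1 - α) A_α(G₁) + k 1 1ᵀ)` up to a scalar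
factor. The all-ones vector being an eigenvector of `A_α(G₁)` for `r₁`, the rank-one term changes
only the eigenvalue `r₁` (Brauer's theorem), which by Gershgorin's theorem is the largest one, `λ₁`.
-/

section RankOne

variable {n R K : Type*} [Fintype n] [DecidableEq n] [CommRing R] [Field K]

theorem det_add_vecMulVec_mul_of_mulVec_eq_smul {B : Matrix n n R} {b : R} {u : n → R}
    (hu : B *ᵥ u = b • u) (v : n → R) :
    (B + vecMulVec u v).det * b = B.det * (b + v ⬝ᵥ u) := by
  let col := replicateCol Unit u
  let row := replicateRow Unit v
  have hBcol : B * col = b • col := by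
    ext i _
    exact congrFun hu i
  have hrow : row * col = of fun _ _ => v ⬝ᵥ u := rfl
  have hfactor : fromBlocks B col (-row) 1 * fromBlocks 1 (-col) 0 (b • 1) =
      fromBlocks B 0 (-row) (of fun _ _ => b + v ⬝ᵥ u) := by
    simp only [fromBlocks_multiply, Matrix.mul_one, Matrix.mul_zero, add_zero,
      Matrix.mul_neg, Matrix.neg_mul, neg_neg, Matrix.mul_smul, hBcol, hrow, neg_add_cancel]
    congr 1
    ext i j
    simp [add_comm]
  have hdet := congrArg det hfactor
  rw [det_mul, det_fromBlocks_one₂₂, det_fromBlocks_zero₂₁, det_fromBlocks_zero₁₂] at hdet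
  have hvec : B - col * -row = B + vecMulVec u v := by
    rw [Matrix.mul_neg, sub_neg_eq_add, vecMulVec_eq Unit]
  rw [hvec] at hdet
  simpa using hdet

theorem charpoly_add_vecMulVec_mul_of_mulVec_eq_smul {A : Matrix n n R} {r : R} {u : n → R}
    (hu : A *ᵥ u = r • u) (v : n → R) :
    (A + vecMulVec u v).charpoly * (X - C r) = A.charpoly * (X - C (r + v ⬝ᵥ u)) := by
  have hchar : charmatrix A *ᵥ (C ∘ u) = (X - C r) • (C ∘ u) := by
    ext1 i
    have hi := congrArg C (congrFun hu i)
    simp only [mulVec, dotProduct, map_sum, map_mul, Pi.smul_apply, smul_eq_mul] at hi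
    simp [charmatrix, mulVec, dotProduct, hi, sub_mul, diagonal_apply]
  have h := det_add_vecMulVec_mul_of_mulVec_eq_smul hchar (-(C ∘ v))
  have hadd : charmatrix A + vecMulVec (C ∘ u) (-(C ∘ v)) = charmatrix (A + vecMulVec u v) := by
    ext1 i j
    simp [charmatrix, vecMulVec_apply, sub_eq_add_neg, add_assoc, add_comm]
  rw [hadd] at h
  simpa [charpoly, dotProduct, sub_eq_add_neg, add_assoc, add_comm] using h

theorem charpoly_smul_of_charpoly_eq_prod {A : Matrix n n K} {μ : n → K}
    (hA : A.charpoly = ∏ i, (X - C (μ i))) (b : K) :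
    (b • A).charpoly = ∏ i, (X - C (b * μ i)) := by
  rcases eq_or_ne b 0 with rfl | hb
  · simp
  have hC : C b * C b⁻¹ = 1 := by rw [← C_mul, mul_inv_cancel₀ hb, C_1]
  have hchar : charmatrix (b • A) =
      C b • (compRingHom (C b⁻¹ * X)).mapMatrix (charmatrix A) := by
    ext1 i j
    rcases eq_or_ne i j with rfl | hij
    · simp [mul_sub, ← mul_assoc, hC]
    · simp [hij]
  rw [charpoly, hchar, det_smul, ← RingHom.map_det, ← charpoly, hA, map_prod, Fintype.card,
    ← Finset.prod_const, ← Finset.prod_mul_distrib]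
  refine Finset.prod_congr rfl fun i _ => ?_
  simp [mul_sub, ← mul_assoc, hC]

theorem charpoly_smul_add_vecMulVec_of_charpoly_eq_prod {A : Matrix n n K} {μ : n → K}
    (hA : A.charpoly = ∏ i, (X - C (μ i))) {i₀ : n} {u : n → K} (hu : A *ᵥ u = μ i₀ • u)
    (b : K) (v : n → K) :
    (b • A + vecMulVec u v).charpoly =
      (∏ i ∈ Finset.univ.erase i₀, (X - C (b * μ i))) * (X - C (b * μ i₀ + v ⬝ᵥ u)) := by
  have hbu : (b • A) *ᵥ u = (b * μ i₀) • u := by rw [smul_mulVec, hu, smul_smul]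
  refine mul_right_cancel₀ (X_sub_C_ne_zero (b * μ i₀)) ?_
  rw [charpoly_add_vecMulVec_mul_of_mulVec_eq_smul hbu, charpoly_smul_of_charpoly_eq_prod hA,
    ← Finset.prod_erase_mul _ _ (Finset.mem_univ i₀), mul_right_comm]

end RankOne

section BlockArrowhead

variable {l m n R : Type*} [Fintype l] [Fintype m] [Fintype n] [DecidableEq l] [DecidableEq m]
  [DecidableEq n] [CommRing R]

theorem det_fromBlocks_fromCols_fromRows (A : Matrix l l R) (B₁ : Matrix l m R)
    (B₂ : Matrix l n R) (C₁ : Matrix m l R) (C₂ : Matrix n l R) {D₁ : Matrix m m R}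
    {D₂ : Matrix n n R} (h₁ : IsUnit D₁.det) (h₂ : IsUnit D₂.det) :
    (fromBlocks A (fromCols B₁ B₂) (fromRows C₁ C₂) (fromBlocks D₁ 0 0 D₂)).det =
      D₁.det * D₂.det * (A - B₁ * D₁⁻¹ * C₁ - B₂ * D₂⁻¹ * C₂).det := by
  have hinv : fromBlocks D₁ 0 0 D₂ * fromBlocks D₁⁻¹ 0 0 D₂⁻¹ = 1 := by
    simp [fromBlocks_multiply, mul_nonsing_inv, h₁, h₂]
  let : Invertible (fromBlocks D₁ 0 0 D₂) := invertibleOfRightInverse _ _ hinv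
  rw [det_fromBlocks₂₂, det_fromBlocks_zero₂₁, invOf_eq_right_inv hinv, fromCols_mul_fromBlocks,
    fromCols_mul_fromRows]
  simp [sub_sub]

end BlockArrowhead

theorem eval_charpoly_eq_det_smul_one_sub {n R : Type*} [Fintype n] [DecidableEq n] [CommRing R]
    (A : Matrix n n R) (x : R) : A.charpoly.eval x = (x • (1 : Matrix n n R) - A).det := by
  rw [eval_charpoly, scalar_apply, smul_one_eq_diagonal]

section TopEigenvalue

variable {n : Type*} [Fintype n] [DecidableEq n]

theorem le_of_isRoot_charpoly_of_sum_row_le {A : Matrix n n ℝ} {r x : ℝ}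
    (hA : ∀ i j, i ≠ j → 0 ≤ A i j) (hr : ∀ i, ∑ j, A i j ≤ r) (hx : A.charpoly.IsRoot x) :
    x ≤ r := by
  rw [← Matrix.charpoly_toLin', ← Module.End.hasEigenvalue_iff_isRoot_charpoly] at hx
  obtain ⟨k, hk⟩ := eigenvalue_mem_ball hx
  have hnorm : ∑ j ∈ Finset.univ.erase k, ‖A k j‖ = ∑ j ∈ Finset.univ.erase k, A k j :=
    Finset.sum_congr rfl fun j hj => Real.norm_of_nonneg (hA k j (Finset.ne_of_mem_erase hj).symm)
  rw [Metric.mem_closedBall, Real.dist_eq, hnorm] at hk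
  linarith [le_abs_self (x - A k k), hr k, Finset.sum_erase_add _ (A k) (Finset.mem_univ k)]

theorem isRoot_charpoly_of_mulVec_eq_smul {K : Type*} [Field K] {A : Matrix n n K} {r : K}
    {u : n → K} (hu : u ≠ 0) (hAu : A *ᵥ u = r • u) : A.charpoly.IsRoot r := by
  rw [IsRoot, eval_charpoly, ← exists_mulVec_eq_zero_iff]
  exact ⟨u, hu, by simp [sub_mulVec, hAu]⟩

theorem eq_of_forall_le_of_charpoly_eq_prod {A : Matrix n n ℝ} {r : ℝ} {ι : Type*} [Fintype ι]
    {μ : ι → ℝ} {i₀ : ι} [Nonempty n] (hA : ∀ i j, i ≠ j → 0 ≤ A i j) (hr : A *ᵥ 1 = r • 1)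
    (hμ : A.charpoly = ∏ i, (X - C (μ i))) (hmax : ∀ i, μ i ≤ μ i₀) : μ i₀ = r := by
  have hroot (x : ℝ) : A.charpoly.IsRoot x ↔ ∃ i, x = μ i := by
    simp [hμ, IsRoot, eval_prod, Finset.prod_eq_zero_iff, sub_eq_zero]
  obtain ⟨i, rfl⟩ := (hroot r).1 (isRoot_charpoly_of_mulVec_eq_smul one_ne_zero hr)
  refine le_antisymm (le_of_isRoot_charpoly_of_sum_row_le hA (fun k => ?_) ((hroot _).2 ⟨i₀, rfl⟩))
    (hmax i)
  simpa [mulVec, dotProduct] using (congrFun hr k).le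

end TopEigenvalue

section AlphaMatrix

theorem cast_degree_eq_sum_adjMatrix {V : Type*} [Fintype V] (R : Type*) [NonAssocSemiring R]
    (G : SimpleGraph V) (v : V) : (G.degree v : R) = ∑ w, G.adjMatrix R v w := by
  simpa [mulVec, dotProduct] using
    (G.adjMatrix_mulVec_const_apply (a := (1 : R)) (v := v)).symm

variable {V : Type*} [Fintype V] (G : SimpleGraph V) (α : ℝ)

theorem Aalpha_eq_degMatrix_add_adjMatrix [DecidableEq V] :
    Aalpha G α = α • G.degMatrix ℝ + (1 - α) • G.adjMatrix ℝ := by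
  unfold Aalpha SimpleGraph.degMatrix
  congr!

variable {G}

theorem degMatrix_eq_smul_one_of_isRegularOfDegree [DecidableEq V] {r : ℕ}
    (hG : G.IsRegularOfDegree r) : G.degMatrix ℝ = (r : ℝ) • (1 : Matrix V V ℝ) := by
  simp only [SimpleGraph.degMatrix, hG.degree_eq, smul_one_eq_diagonal]

theorem Aalpha_mulVec_one_of_isRegularOfDegree {r : ℕ} (hG : G.IsRegularOfDegree r) :
    Aalpha G α *ᵥ 1 = (r : ℝ) • 1 := by
  rw [Aalpha_eq_degMatrix_add_adjMatrix, degMatrix_eq_smul_one_of_isRegularOfDegree hG]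
  have hadj : G.adjMatrix ℝ *ᵥ 1 = (r : ℝ) • 1 := by
    ext v
    simpa using! G.adjMatrix_mulVec_const_apply_of_regular hG (a := (1 : ℝ)) (v := v)
  rw [add_mulVec, smul_mulVec, smul_mulVec, smul_mulVec, one_mulVec, hadj, ← add_smul,
    add_sub_cancel, one_smul]

variable {α}

theorem Aalpha_nonneg_of_ne (hα : α ≤ 1) {v w : V} (hvw : v ≠ w) : 0 ≤ Aalpha G α v w := by
  have hoff : Aalpha G α v w = (1 - α) * G.adjMatrix ℝ v w := by simp [Aalpha, hvw]
  rw [hoff, SimpleGraph.adjMatrix_apply]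
  exact mul_nonneg (sub_nonneg.2 hα) (by split_ifs <;> simp)

theorem vecMulVec_one_mul_inv_mul_vecMulVec_one {m n : Type*} [Fintype n] [DecidableEq n]
    (M : Matrix n n ℝ) (x : ℝ) :
    (vecMulVec 1 1 : Matrix m n ℝ) * (x • (1 : Matrix n n ℝ) - M)⁻¹ *
        (vecMulVec 1 1 : Matrix n m ℝ) = coronal M x • (vecMulVec 1 1 : Matrix m m ℝ) := by
  have hcoronal : coronal M x = (1 ᵥ* (x • (1 : Matrix n n ℝ) - M)⁻¹) ⬝ᵥ 1 := by
    simp only [coronal, vecMul, dotProduct, Pi.one_apply, one_mul, mul_one]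
    rw [Finset.sum_comm]
    congr!
  rw [vecMulVec_mul, vecMulVec_mul_vecMulVec, ← hcoronal, vecMulVec_smul]

end AlphaMatrix

section Incidence

variable {V : Type*} [DecidableEq V] (R : Type*) (G : SimpleGraph V)

/-- The vertex-edge incidence matrix of `G`. Unlike in `SimpleGraph.incMatrix`, whose columns are
indexed by all of `Sym2 V`, there is exactly one column for each edge of `G`. -/
def edgeIncMatrix [Zero R] [One R] : Matrix V G.edgeSet R :=
  (G.incMatrix R).submatrix id Subtype.val

theorem edgeIncMatrix_apply [MulZeroOneClass R] (v : V) (e : G.edgeSet) :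
    edgeIncMatrix R G v e = if v ∈ (e : Sym2 V) then 1 else 0 := by
  simp [edgeIncMatrix, SimpleGraph.incMatrix_apply', SimpleGraph.incidenceSet]

variable [Fintype V]

theorem sum_edgeIncMatrix_col [NonAssocSemiring R] (e : G.edgeSet) :
    ∑ v, edgeIncMatrix R G v e = 2 :=
  G.sum_incMatrix_apply_of_mem_edgeSet e.2

theorem edgeIncMatrix_mul_transpose [Semiring R] :
    edgeIncMatrix R G * (edgeIncMatrix R G)ᵀ = G.degMatrix R + G.adjMatrix R := by
  have hinc : edgeIncMatrix R G * (edgeIncMatrix R G)ᵀ = G.incMatrix R * (G.incMatrix R)ᵀ := by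
    ext v w
    simp only [Matrix.mul_apply, transpose_apply]
    refine Fintype.sum_of_injective _ Subtype.val_injective _ _ (fun e he => ?_) fun _ => rfl
    rw [G.incMatrix_of_notMem_incidenceSet fun h => he ⟨⟨e, h.1⟩, rfl⟩, zero_mul]
  rw [hinc, SimpleGraph.incMatrix_mul_transpose]
  ext v w
  rcases eq_or_ne v w with rfl | hvw
  · simp [SimpleGraph.degMatrix]
  · simp [SimpleGraph.degMatrix, hvw, SimpleGraph.adjMatrix_apply]

theorem sum_edgeIncMatrix_row [NonAssocSemiring R] (v : V) :
    ∑ e, edgeIncMatrix R G v e = G.degree v := by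
  rw [← SimpleGraph.sum_incMatrix_apply]
  refine Fintype.sum_of_injective _ Subtype.val_injective _ _ (fun e he => ?_) fun _ => rfl
  exact G.incMatrix_of_notMem_incidenceSet fun h => he ⟨⟨e, h.1⟩, rfl⟩

end Incidence

section Join

variable {V₁ V₂ : Type*} (G₁ : SimpleGraph V₁) (G₂ : SimpleGraph V₂)

theorem adjMatrix_subdivisionVertexJoin [DecidableEq V₁] (R : Type*) [MulZeroOneClass R] :
    (subdivisionVertexJoin G₁ G₂).adjMatrix R =
      fromBlocks 0 (fromCols (edgeIncMatrix R G₁) (vecMulVec 1 1))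
        (fromRows (edgeIncMatrix R G₁)ᵀ (vecMulVec 1 1)) (fromBlocks 0 0 0 (G₂.adjMatrix R)) := by
  have hG₂ (u w : V₂) : (¬u = w ∧ (G₂.Adj u w ∨ G₂.Adj w u)) ↔ G₂.Adj u w := by
    rw [G₂.adj_comm w u, or_self, and_iff_right_of_imp fun h => h.ne]
  ext (v | e | u) (w | f | t) <;> rw [SimpleGraph.adjMatrix_apply] <;>
    simp [subdivisionVertexJoin, SimpleGraph.adjMatrix_apply, edgeIncMatrix_apply, hG₂]

variable [Fintype V₁] [Fintype V₂]

theorem cast_degree_subdivisionVertexJoin (R : Type*) [NonAssocSemiring R]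
    (a : V₁ ⊕ (G₁.edgeSet ⊕ V₂)) :
    ((subdivisionVertexJoin G₁ G₂).degree a : R) =
      Sum.elim (fun v => (G₁.degree v : R) + Fintype.card V₂)
        (Sum.elim (fun _ => 2) fun u => (G₂.degree u : R) + Fintype.card V₁) a := by
  rw [cast_degree_eq_sum_adjMatrix, adjMatrix_subdivisionVertexJoin]
  rcases a with v | e | u
  · simp [sum_edgeIncMatrix_row]
  · simp [sum_edgeIncMatrix_col]
  · simp [cast_degree_eq_sum_adjMatrix, add_comm]

variable [DecidableEq V₁] [DecidableEq V₂]

theorem smul_one_sub_Aalpha_subdivisionVertexJoin (α x : ℝ) :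
    x • (1 : Matrix (V₁ ⊕ (G₁.edgeSet ⊕ V₂)) (V₁ ⊕ (G₁.edgeSet ⊕ V₂)) ℝ) -
        Aalpha (subdivisionVertexJoin G₁ G₂) α =
      fromBlocks ((x - α * Fintype.card V₂) • (1 : Matrix V₁ V₁ ℝ) - α • G₁.degMatrix ℝ)
        (fromCols ((α - 1) • edgeIncMatrix ℝ G₁) ((α - 1) • vecMulVec 1 1))
        (fromRows ((α - 1) • (edgeIncMatrix ℝ G₁)ᵀ) ((α - 1) • vecMulVec 1 1))
        (fromBlocks ((x - 2 * α) • 1) 0 0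
          ((x - α * Fintype.card V₁) • (1 : Matrix V₂ V₂ ℝ) - Aalpha G₂ α)) := by
  rw [Aalpha_eq_degMatrix_add_adjMatrix, Aalpha_eq_degMatrix_add_adjMatrix,
    adjMatrix_subdivisionVertexJoin]
  ext (v | e | u) (w | f | t) <;>
    simp [SimpleGraph.degMatrix, cast_degree_subdivisionVertexJoin, Matrix.one_apply,
      diagonal_apply] <;>
    grind

variable {G₂}

theorem eval_charpoly_Aalpha_subdivisionVertexJoin {α x : ℝ}
    (hdet : ((x - α * Fintype.card V₁) • (1 : Matrix V₂ V₂ ℝ) - Aalpha G₂ α).det ≠ 0)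
    (hx : x ≠ 2 * α) :
    (Aalpha (subdivisionVertexJoin G₁ G₂) α).charpoly.eval x =
      (x - 2 * α) ^ ((Fintype.card G₁.edgeSet : ℤ) - Fintype.card V₁) *
        (Aalpha G₂ α).charpoly.eval (x - α * Fintype.card V₁) *
        ((x - 2 * α) • ((x - α * Fintype.card V₂) • (1 : Matrix V₁ V₁ ℝ) - α • G₁.degMatrix ℝ) -
          (1 - α) ^ 2 • (G₁.degMatrix ℝ + G₁.adjMatrix ℝ) -
          ((1 - α) ^ 2 * (x - 2 * α) * coronal (Aalpha G₂ α) (x - α * Fintype.card V₁)) •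
            vecMulVec 1 1).det := by
  have hy : x - 2 * α ≠ 0 := sub_ne_zero.2 hx
  set Γ := coronal (Aalpha G₂ α) (x - α * Fintype.card V₁)
  set M := (x - 2 * α) • ((x - α * Fintype.card V₂) • (1 : Matrix V₁ V₁ ℝ) - α • G₁.degMatrix ℝ) -
    (1 - α) ^ 2 • (G₁.degMatrix ℝ + G₁.adjMatrix ℝ) -
    ((1 - α) ^ 2 * (x - 2 * α) * Γ) • vecMulVec 1 1
  have hinv : ((x - 2 * α) • (1 : Matrix G₁.edgeSet G₁.edgeSet ℝ))⁻¹ = (x - 2 * α)⁻¹ • 1 :=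
    inv_eq_right_inv (by simp [smul_smul, hy])
  rw [eval_charpoly_eq_det_smul_one_sub, eval_charpoly_eq_det_smul_one_sub,
    smul_one_sub_Aalpha_subdivisionVertexJoin,
    det_fromBlocks_fromCols_fromRows _ _ _ _ _ (by simp [hy]) hdet.isUnit, hinv]
  simp only [Matrix.smul_mul, Matrix.mul_smul, Matrix.mul_one, edgeIncMatrix_mul_transpose,
    vecMulVec_one_mul_inv_mul_vecMulVec_one]
  have hschur : (x - α * Fintype.card V₂) • (1 : Matrix V₁ V₁ ℝ) - α • G₁.degMatrix ℝ -
      (α - 1) • (x - 2 * α)⁻¹ • (α - 1) • (G₁.degMatrix ℝ + G₁.adjMatrix ℝ) -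
      (α - 1) • (α - 1) • Γ • vecMulVec 1 1 = (x - 2 * α)⁻¹ • M := by
    simp only [M]
    generalize x - 2 * α = y at hy
    match_scalars <;> field_simp <;> ring
  rw [hschur, det_smul, det_smul, det_one, zpow_sub₀ hy, zpow_natCast, zpow_natCast, inv_pow]
  ring

variable {G₁}

theorem Aalpha_charpoly_subdivisionVertexJoin_general {r : ℕ} (hG₁ : G₁.IsRegularOfDegree r)
    {α : ℝ} {μ : V₁ → ℝ} (hμ : (Aalpha G₁ α).charpoly = ∏ i, (X - C (μ i))) {i₀ : V₁}
    (hi₀ : μ i₀ = r) {x : ℝ}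
    (hdet : ((x - α * Fintype.card V₁) • (1 : Matrix V₂ V₂ ℝ) - Aalpha G₂ α).det ≠ 0)
    (hx : x ≠ 2 * α) :
    (Aalpha (subdivisionVertexJoin G₁ G₂) α).charpoly.eval x =
      (x - 2 * α) ^ ((Fintype.card G₁.edgeSet : ℤ) - Fintype.card V₁) *
        (Aalpha G₂ α).charpoly.eval (x - α * Fintype.card V₁) *
        (∏ i ∈ Finset.univ.erase i₀,
          (x ^ 2 - α * (2 + r + Fintype.card V₂) * x
            + α * (α * r + r + 2 * α * Fintype.card V₂) - (1 - α) * ((1 - α) * r + μ i))) *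
        (x ^ 2 - α * (2 + r + Fintype.card V₂) * x
          - 2 * (r - 2 * α * r - α ^ 2 * Fintype.card V₂)
          - Fintype.card V₁ * (1 - α) ^ 2 * (x - 2 * α) *
            coronal (Aalpha G₂ α) (x - α * Fintype.card V₁)) := by
  set n₂ : ℝ := (Fintype.card V₂ : ℝ)
  set k := (1 - α) ^ 2 * (x - 2 * α) * coronal (Aalpha G₂ α) (x - α * Fintype.card V₁)
  let c := (x - 2 * α) * (x - α * n₂ - α * r) - (1 - α) * ((1 - α) * r - α * r)
  have hschur : (x - 2 * α) • ((x - α * n₂) • (1 : Matrix V₁ V₁ ℝ) - α • G₁.degMatrix ℝ) -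
      (1 - α) ^ 2 • (G₁.degMatrix ℝ + G₁.adjMatrix ℝ) - k • vecMulVec 1 1 =
      c • 1 - ((1 - α) • Aalpha G₁ α + vecMulVec 1 (k • 1)) := by
    rw [Aalpha_eq_degMatrix_add_adjMatrix, degMatrix_eq_smul_one_of_isRegularOfDegree hG₁,
      vecMulVec_smul]
    module
  have hrow : Aalpha G₁ α *ᵥ 1 = μ i₀ • 1 := by
    rw [hi₀, Aalpha_mulVec_one_of_isRegularOfDegree α hG₁]
  have hfactor (i : V₁) : (X - C ((1 - α) * μ i)).eval c =
      x ^ 2 - α * (2 + r + n₂) * x + α * (α * r + r + 2 * α * n₂) -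
        (1 - α) * ((1 - α) * r + μ i) := by
    simp only [eval_sub, eval_X, eval_C, c]
    ring
  have htop : (X - C ((1 - α) * r + (k • 1 : V₁ → ℝ) ⬝ᵥ 1)).eval c =
      x ^ 2 - α * (2 + r + n₂) * x - 2 * (r - 2 * α * r - α ^ 2 * n₂) -
        Fintype.card V₁ * k := by
    simp only [eval_sub, eval_X, eval_C, smul_dotProduct, one_dotProduct_one, smul_eq_mul, c]
    ring
  rw [eval_charpoly_Aalpha_subdivisionVertexJoin G₁ hdet hx, hschur,
    ← eval_charpoly_eq_det_smul_one_sub, charpoly_smul_add_vecMulVec_of_charpoly_eq_prod hμ hrow,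
    hi₀, eval_mul, eval_prod, ← mul_assoc]
  simp only [hfactor, htop, k, ← mul_assoc]

end Join

/-- Theorem 3.1: the `A_α`-characteristic polynomial of the subdivision-vertex join
`G₁ ∨̇ G₂` of an `r₁`-regular graph `G₁` (on `n₁` vertices and `m₁` edges) and an
arbitrary graph `G₂` (on `n₂` vertices). -/
theorem Aalpha_charpoly_subdivisionVertexJoin
    {n₁ m₁ n₂ r₁ : ℕ} (G₁ : SimpleGraph (Fin n₁)) (G₂ : SimpleGraph (Fin n₂))
    (hconn : G₁.Connected) (hreg : G₁.IsRegularOfDegree r₁)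
    (hm : Fintype.card G₁.edgeSet = m₁)
    (α : ℝ) (hα : α ∈ Set.Icc (0 : ℝ) 1)
    (μ : Fin n₁ → ℝ) (hμ : Antitone μ)
    (hμch : (Aalpha G₁ α).charpoly = ∏ i, (X - C (μ i)))
    (x : ℝ)
    (hx₁ : ((x - α * n₁) • (1 : Matrix (Fin n₂) (Fin n₂) ℝ) - Aalpha G₂ α).det ≠ 0)
    (hx₂ : x ≠ 2 * α) :
    ((Aalpha (subdivisionVertexJoin G₁ G₂) α).charpoly).eval x =
      (x - 2 * α) ^ ((m₁ : ℤ) - (n₁ : ℤ)) *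
        ((Aalpha G₂ α).charpoly).eval (x - α * n₁) *
        (∏ i ∈ Finset.univ.filter (fun i : Fin n₁ => i.val ≠ 0),
          (x ^ 2 - α * (2 + r₁ + n₂) * x + α * (α * r₁ + r₁ + 2 * α * n₂)
            - (1 - α) * ((1 - α) * r₁ + μ i))) *
        (x ^ 2 - α * (2 + r₁ + n₂) * x - 2 * (r₁ - 2 * α * r₁ - α ^ 2 * n₂)
          - n₁ * (1 - α) ^ 2 * (x - 2 * α) * coronal (Aalpha G₂ α) (x - α * n₁)) := by
  have hpos : 0 < n₁ := Fin.pos_iff_nonempty.2 hconn.nonempty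
  have := hconn.nonempty
  have hμ₀ : μ ⟨0, hpos⟩ = r₁ := eq_of_forall_le_of_charpoly_eq_prod
    (fun _ _ => Aalpha_nonneg_of_ne hα.2) (Aalpha_mulVec_one_of_isRegularOfDegree α hreg) hμch
    fun i => hμ (Fin.mk_le_of_le_val i.val.zero_le)
  have hfilter : Finset.univ.filter (fun i : Fin n₁ => i.val ≠ 0) =
      Finset.univ.erase ⟨0, hpos⟩ := by
    ext i
    simp [Fin.ext_iff]
  rw [hfilter, ← hm]
  simpa using Aalpha_charpoly_subdivisionVertexJoin_general (G₂ := G₂) hreg hμch hμ₀ (by simpa) hx₂
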